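/- Fix an integer m ≥ 1 and t > 0. Then as p tends to infinity through the prime numbers, |tC_{mp}^eucl|_Rips converges to e^{−2t} + 2πt·Σ_r (1/r)·e^{−2t·cos(π/(2r))}·sin(π/(2r)), where the sum is over all odd divisors r of m. -/

import Mathlib

open scoped BigOperators Real

/-- The Rips magnitude function of a finite subset `A` of a metric space:
`|tA|_Rips = Σ_{∅ ≠ B ⊆ A} (−1)^{#B−1} e^{−diam(B)·t}`. -/
noncomputable def ripsMag {Y : Type*} [MetricSpace Y] (A : Finset Y) (t : ℝ) : ℝ :=
  ∑ B ∈ A.powerset.filter (fun B => B.Nonempty),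
    (-1 : ℝ) ^ (B.card - 1) * Real.exp (-(Metric.diam (B : Set Y)) * t)


/-- The Euclidean cycle `C_n^eucl`: `n` equally spaced points on the unit circle
in `ℝ² = ℂ`, with the Euclidean metric. -/
noncomputable def euclCycle (n : ℕ) : Finset ℂ :=
  (Finset.range n).image
    (fun k : ℕ => Complex.exp (2 * (π : ℂ) * (k : ℂ) / (n : ℂ) * Complex.I))

/-!
The diameter of a subset of `C_n^eucl` is an increasing function of its cyclic diameter, so Abel
summation writes the Rips magnitude in terms of the alternating sums `∑ (-1) ^ #A` over the
nonempty subsets `A` of `ℤ/n` of cyclic diameter at most `k`, one for each scale `k`. A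
sign-reversing involution, which adds the successor of a distinguished point `a` of `A` or removes
it, cancels all `A` but the residue classes modulo `s = n - 2k`, and these have diameter at most `k`
only when `s` divides `k`. The surviving scales correspond to the odd divisors `r = n / s` of `n`.
The term of `r` is a difference quotient of `x ↦ exp (-2 t cos x)` at `π / (2 r)` with step
`-π / n`, multiplied by `π / r`; as it is `O(1 / r ^ 2)` uniformly in `n`, dominated convergence
gives the limit, in which only the odd divisors of `m` survive because `r < p` is prime to `p`.
-/

open Filter Finset Topology
open scoped symmDiff

section Toggle

variable {α : Type*} [DecidableEq α]

theorem neg_one_pow_card_symmDiff_singleton (A : Finset α) (x : α) :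
    (-1 : ℤ) ^ #(A ∆ {x}) = -(-1) ^ #A := by
  by_cases hx : x ∈ A
  · rw [symmDiff_of_ge (singleton_subset_iff.2 hx), sdiff_singleton_eq_erase,
      ← card_erase_add_one hx, pow_succ, mul_neg_one, neg_neg]
  · rw [(disjoint_singleton_right.2 hx).symmDiff_eq_sup, sup_eq_union,
      card_union_of_disjoint (disjoint_singleton_right.2 hx), card_singleton, pow_succ, mul_neg_one]

theorem sum_neg_one_pow_card_eq_zero_of_symmDiff_mem {F : Finset (Finset α)} (v : Finset α → α)
    (hF : ∀ A ∈ F, A ∆ {v A} ∈ F) (hv : ∀ A ∈ F, v (A ∆ {v A}) = v A) :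
    ∑ A ∈ F, (-1 : ℤ) ^ #A = 0 := by
  refine sum_involution (fun A _ => A ∆ {v A}) (fun A _ => ?_) (fun A _ _ h => ?_) hF
    fun A hA => ?_
  · rw [neg_one_pow_card_symmDiff_singleton, add_neg_cancel]
  · exact singleton_ne_empty (v A) (symmDiff_eq_left.1 h)
  · rw [hv A hA, symmDiff_symmDiff_cancel_right]

end Toggle

section CyclicDiam

variable {n k : ℕ} {A B : Finset (ZMod n)} {a b : ZMod n}

/-- The diameter of a subset of `ZMod n` for the cyclic distance, in which `x` and `y` are at
distance `|y - x|`, the difference being represented in `(-n/2, n/2]`. -/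
def cyclicDiam (A : Finset (ZMod n)) : ℕ :=
  (A ×ˢ A).sup fun p => (p.2 - p.1).valMinAbs.natAbs

theorem cyclicDiam_le_iff_natAbs_le :
    cyclicDiam A ≤ k ↔ ∀ x ∈ A, ∀ y ∈ A, (y - x).valMinAbs.natAbs ≤ k := by
  simp only [cyclicDiam, Finset.sup_le_iff, mem_product, Prod.forall, and_imp]
  exact forall_congr' fun _ => forall_comm

theorem natAbs_valMinAbs_le_cyclicDiam (ha : a ∈ A) (hb : b ∈ A) :
    (b - a).valMinAbs.natAbs ≤ cyclicDiam A :=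
  cyclicDiam_le_iff_natAbs_le.1 le_rfl a ha b hb

theorem exists_natAbs_valMinAbs_eq_cyclicDiam (hA : A.Nonempty) :
    ∃ a ∈ A, ∃ b ∈ A, (b - a).valMinAbs.natAbs = cyclicDiam A := by
  obtain ⟨⟨a, b⟩, hab, h⟩ := exists_mem_eq_sup (A ×ˢ A) (hA.product hA)
    fun p => (p.2 - p.1).valMinAbs.natAbs
  exact ⟨a, (mem_product.1 hab).1, b, (mem_product.1 hab).2, h.symm⟩

theorem cyclicDiam_mono (h : A ⊆ B) : cyclicDiam A ≤ cyclicDiam B :=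
  Finset.sup_mono (product_subset_product h h)

theorem cyclicDiam_le_half [NeZero n] (A : Finset (ZMod n)) : cyclicDiam A ≤ n / 2 :=
  cyclicDiam_le_iff_natAbs_le.2 fun _ _ _ _ => ZMod.natAbs_valMinAbs_le _

theorem natAbs_valMinAbs_le_iff [NeZero n] :
    a.valMinAbs.natAbs ≤ k ↔ ∀ j : ℕ, k < j → j + k < n → a ≠ j := by
  rw [ZMod.valMinAbs_natAbs_eq_min]
  have hlt := a.val_lt
  constructor
  · rintro ha j hkj hjn rfl
    rw [ZMod.val_cast_of_lt (by omega)] at ha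
    omega
  · intro h
    by_contra ha
    exact h a.val (by omega) (by omega) (ZMod.natCast_zmod_val a).symm

theorem cyclicDiam_le_iff [NeZero n] :
    cyclicDiam A ≤ k ↔ ∀ x ∈ A, ∀ j : ℕ, k < j → j + k < n → x + j ∉ A := by
  simp only [cyclicDiam_le_iff_natAbs_le, natAbs_valMinAbs_le_iff, ne_eq, sub_eq_iff_eq_add']
  exact forall₂_congr fun x _ =>
    ⟨fun h j hkj hjn hj => h _ hj j hkj hjn rfl, fun h y hy j hkj hjn hxy => h j hkj hjn (hxy ▸ hy)⟩

theorem cyclicDiam_insert_le_iff :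
    cyclicDiam (insert b A) ≤ k ↔
      (∀ x ∈ A, (b - x).valMinAbs.natAbs ≤ k) ∧ cyclicDiam A ≤ k := by
  have hsymm : ∀ x, (x - b).valMinAbs.natAbs = (b - x).valMinAbs.natAbs := fun x => by
    rw [← neg_sub, ZMod.natAbs_valMinAbs_neg]
  simp only [cyclicDiam_le_iff_natAbs_le, forall_mem_insert, sub_self, ZMod.valMinAbs_zero,
    Int.natAbs_zero, zero_le, true_and, hsymm, forall_and]
  tauto

theorem cyclicDiam_insert_add_one_le [NeZero n] (hA : cyclicDiam A ≤ k) (ha : a ∈ A)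
    (hak : a - k ∉ A) : cyclicDiam (insert (a + 1) A) ≤ k := by
  refine cyclicDiam_insert_le_iff.2 ⟨fun x hx => natAbs_valMinAbs_le_iff.2 ?_, hA⟩
  intro j hkj hjn hj
  obtain ⟨i, rfl⟩ : ∃ i, j = i + 1 := Nat.exists_eq_add_of_lt hkj |>.imp' (k + ·) (by omega)
  have hxi : x + i = a := by push_cast at hj; linear_combination -hj
  rcases Nat.lt_succ_iff_lt_or_eq.1 hkj with hki | rfl
  · exact cyclicDiam_le_iff.1 hA x hx i hki (by omega) (hxi ▸ ha)
  · exact hak (eq_sub_of_add_eq hxi ▸ hx)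

theorem add_one_add_notMem [NeZero n] (hk : 2 * k + 1 < n) (hA : cyclicDiam A ≤ k) (ha : a ∈ A) :
    a + 1 + k ∉ A := by
  have h := cyclicDiam_le_iff.1 hA a ha (k + 1) k.lt_succ_self (by omega)
  rwa [Nat.cast_add_one, add_comm (k : ZMod n), ← add_assoc] at h

end CyclicDiam

section RunStart

variable {n k : ℕ} {A : Finset (ZMod n)} {a y : ZMod n}

/-- Call `x - k` the antipode of `x ∈ A`, and split the circle into runs of points of `A` that are
not separated by an antipode. `IsRunStart k A a` says that `a` is the first point of its run: going
backwards from `a`, with `a` itself allowed as an antipode, one meets an antipode `a - i` of a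
point of `A` before meeting another point of `A`. -/
def IsRunStart (k : ℕ) (A : Finset (ZMod n)) (a : ZMod n) : Prop :=
  a ∈ A ∧ ∃ i : ℕ, a - i + k ∈ A ∧ ∀ j : ℕ, 0 < j → j ≤ i → a - j ∉ A

/-- The run starts at which a clique `A` is not rigid: `a + 1` may be added to `A` or removed
from it without increasing the diameter beyond `k` and without changing the run starts. -/
def IsLooseStart (k : ℕ) (A : Finset (ZMod n)) (a : ZMod n) : Prop :=
  IsRunStart k A a ∧ a - k ∉ A

theorem exists_isRunStart (hA : A.Nonempty) : ∃ a, IsRunStart k A a := by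
  classical
  obtain ⟨b, hb⟩ := hA
  have hex : ∃ i : ℕ, b - k + i ∈ A := ⟨k, by rwa [sub_add_cancel]⟩
  refine ⟨b - k + Nat.find hex, Nat.find_spec hex, Nat.find hex, by ring_nf; exact hb, ?_⟩
  intro j hj hji hjA
  refine Nat.find_min hex (m := Nat.find hex - j) (by omega) ?_
  rwa [Nat.cast_sub hji, ← add_sub_assoc]

theorem IsRunStart.sub (ha : IsRunStart k A a) (hak : a - k ∈ A) : IsRunStart k A (a - k) :=
  ⟨hak, 0, by simpa using ha.1, fun _ hj hj' => absurd hj' hj.not_ge⟩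

theorem IsRunStart.of_insert_add_one (ha : a ∈ A) (hak : a - k ∉ A)
    (hak' : a + 1 + k ∉ insert (a + 1) A) (hy : IsRunStart k (insert (a + 1) A) y) :
    IsRunStart k A y := by
  obtain ⟨hyA, i, hi, hj⟩ := hy
  have hya : y ≠ a + 1 := by
    rintro rfl
    rcases i.eq_zero_or_pos with rfl | hpos
    · exact hak' (by simpa using hi)
    · exact hj 1 one_pos hpos (by simp [ha])
  have hjA : ∀ j : ℕ, 0 < j → j ≤ i → y - j ∉ A :=
    fun j hj0 hji hjA => hj j hj0 hji (mem_insert_of_mem hjA)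
  refine ⟨mem_of_mem_insert_of_ne hyA hya, ?_⟩
  rcases mem_insert.1 hi with hi | hi
  · -- The antipode of `a + 1` is preceded by the antipode of `a`.
    have hya : y - (i + 1 : ℕ) = a - k := by push_cast; linear_combination hi
    refine ⟨i + 1, by rwa [hya, sub_add_cancel], fun j hj0 hji => ?_⟩
    rcases Nat.le_succ_iff.1 hji with hji | rfl
    · exact hjA j hj0 hji
    · rwa [hya]
  · exact ⟨i, hi, hjA⟩

theorem IsRunStart.insert_add_one (ha : a ∈ A) (hak' : a + 1 + k ∉ A) (hy : IsRunStart k A y) :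
    IsRunStart k (insert (a + 1) A) y := by
  obtain ⟨hyA, i, hi, hj⟩ := hy
  refine ⟨mem_insert_of_mem hyA, i, mem_insert_of_mem hi, fun j hj0 hji hjA => ?_⟩
  rcases mem_insert.1 hjA with hja | hjA
  · rcases hji.lt_or_eq with hji | rfl
    · -- The walk meets `a ∈ A` right after `a + 1`.
      refine hj (j + 1) j.succ_pos hji ?_
      rwa [Nat.cast_add_one, ← sub_sub, hja, add_sub_cancel_right]
    · exact hak' (hja ▸ hi)
  · exact hj j hj0 hji hjA

theorem isLooseStart_insert_add_one_iff (ha : a ∈ A) (hak : a - k ∉ A)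
    (hak' : a + 1 + k ∉ insert (a + 1) A) :
    IsLooseStart k (insert (a + 1) A) y ↔ IsLooseStart k A y := by
  have hA : a + 1 + k ∉ A := fun h => hak' (mem_insert_of_mem h)
  refine (and_congr_left' ⟨.of_insert_add_one ha hak hak', .insert_add_one ha hA⟩).trans ?_
  refine and_congr_right fun hy => not_congr (mem_insert.trans (or_iff_right ?_))
  rintro hya
  exact hA (sub_eq_iff_eq_add.1 hya ▸ hy.1)

theorem cyclicDiam_symmDiff_add_one_le [NeZero n] (hA : cyclicDiam A ≤ k)
    (ha : IsLooseStart k A a) : cyclicDiam (A ∆ {a + 1}) ≤ k := by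
  by_cases hx : a + 1 ∈ A
  · rw [symmDiff_of_ge (singleton_subset_iff.2 hx)]
    exact (cyclicDiam_mono sdiff_subset).trans hA
  · rw [(disjoint_singleton_right.2 hx).symmDiff_eq_sup, sup_eq_union, union_comm]
    exact cyclicDiam_insert_add_one_le hA ha.1.1 ha.2

theorem isLooseStart_symmDiff_add_one_iff [NeZero n] (hk : 2 * k + 1 < n) (hA : cyclicDiam A ≤ k)
    (ha : IsLooseStart k A a) : IsLooseStart k (A ∆ {a + 1}) y ↔ IsLooseStart k A y := by
  have : Fact (1 < n) := ⟨by omega⟩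
  by_cases hx : a + 1 ∈ A
  · rw [symmDiff_of_ge (singleton_subset_iff.2 hx), sdiff_singleton_eq_erase]
    have hak' : a + 1 + k ∉ A := add_one_add_notMem hk hA ha.1.1
    have hE := isLooseStart_insert_add_one_iff (A := A.erase (a + 1)) (y := y) (k := k)
      (mem_erase.2 ⟨by simp, ha.1.1⟩) (fun h => ha.2 (mem_of_mem_erase h))
    rw [insert_erase hx] at hE
    exact (hE hak').symm
  · rw [(disjoint_singleton_right.2 hx).symmDiff_eq_sup, sup_eq_union, union_comm]
    have hak' := add_one_add_notMem hk (cyclicDiam_insert_add_one_le hA ha.1.1 ha.2)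
      (mem_insert_of_mem ha.1.1)
    exact isLooseStart_insert_add_one_iff ha.1.1 ha.2 hak'

open Classical in
theorem sum_neg_one_pow_card_isLooseStart_eq_zero [NeZero n] (hk : 2 * k + 1 < n) :
    ∑ A : Finset (ZMod n) with cyclicDiam A ≤ k ∧ ∃ a, IsLooseStart k A a, (-1 : ℤ) ^ #A = 0 := by
  let looseStart (A : Finset (ZMod n)) : ZMod n := epsilon (IsLooseStart k A)
  have hloose : ∀ A ∈ ({A | cyclicDiam A ≤ k ∧ ∃ a, IsLooseStart k A a} : Finset _),
      cyclicDiam A ≤ k ∧ IsLooseStart k A (looseStart A) := fun A hA =>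
    (mem_filter_univ A |>.1 hA).imp_right fun h => epsilon_spec h
  refine sum_neg_one_pow_card_eq_zero_of_symmDiff_mem (fun A => looseStart A + 1)
    (fun A hA => ?_) (fun A hA => ?_) <;> obtain ⟨hAk, hAa⟩ := hloose A hA
  · exact (mem_filter_univ _).2 ⟨cyclicDiam_symmDiff_add_one_le hAk hAa, looseStart A,
      (isLooseStart_symmDiff_add_one_iff hk hAk hAa).2 hAa⟩
  · have hstarts : IsLooseStart k (A ∆ {looseStart A + 1}) = IsLooseStart k A :=
      funext fun _ => propext (isLooseStart_symmDiff_add_one_iff hk hAk hAa)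
    simp only [looseStart] at hstarts ⊢
    rw [hstarts]

end RunStart

section ResidueClass

variable {n s : ℕ} [NeZero n]

/-- The set of elements of `ZMod n` in the residue class `c` modulo a divisor `s` of `n`. -/
def residueClass (hsn : s ∣ n) (c : ZMod s) : Finset (ZMod n) :=
  {x | ZMod.castHom hsn (ZMod s) x = c}

variable {hsn : s ∣ n} {c : ZMod s}

theorem mem_residueClass {x : ZMod n} :
    x ∈ residueClass hsn c ↔ ZMod.castHom hsn (ZMod s) x = c :=
  mem_filter_univ x

theorem residueClass_nonempty (hsn : s ∣ n) (c : ZMod s) : (residueClass hsn c).Nonempty :=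
  (ZMod.castHom_surjective hsn c).imp fun _ => mem_residueClass.2

theorem residueClass_injective (hsn : s ∣ n) : Function.Injective (residueClass hsn) := by
  intro c d hcd
  obtain ⟨x, hx⟩ := residueClass_nonempty hsn c
  exact (mem_residueClass.1 hx).symm.trans (mem_residueClass.1 (hcd ▸ hx))

theorem mul_card_residueClass (hsn : s ∣ n) (c : ZMod s) : s * #(residueClass hsn c) = n := by
  have : NeZero s := ⟨ne_zero_of_dvd_ne_zero (NeZero.ne n) hsn⟩
  have hcard : ∀ d : ZMod s, #(residueClass hsn d) = #(residueClass hsn c) := fun d =>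
    AddMonoidHom.card_fiber_eq_of_mem_range (ZMod.castHom hsn (ZMod s))
      (ZMod.castHom_surjective hsn d) (ZMod.castHom_surjective hsn c)
  have hsum := card_eq_sum_card_fiberwise (s := (univ : Finset (ZMod n))) (t := univ)
    (f := ZMod.castHom hsn (ZMod s)) (by simp)
  rw [card_univ, ZMod.card] at hsum
  calc s * #(residueClass hsn c) = ∑ d : ZMod s, #(residueClass hsn d) := by simp [hcard]
    _ = n := hsum.symm

end ResidueClass

section Rigid

variable {n k s : ℕ} {A : Finset (ZMod n)} {a : ZMod n}

theorem natCast_add_two_mul_eq_zero (hn : 2 * k + s = n) : (s : ZMod n) + 2 * k = 0 := by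
  have h : ((2 * k + s : ℕ) : ZMod n) = 0 := by rw [hn, ZMod.natCast_self]
  rw [add_comm]
  exact_mod_cast h

theorem add_mul_mem_of_isRunStart (hn : 2 * k + s = n) (hrigid : ∀ b, ¬ IsLooseStart k A b)
    (ha : IsRunStart k A a) (i : ℕ) : a + (i * s : ℕ) ∈ A := by
  have hstart : ∀ i : ℕ, IsRunStart k A (a - i * k) := by
    intro i
    induction i with
    | zero => simpa using ha
    | succ i ih =>
      convert ih.sub (not_not.1 fun h => hrigid _ ⟨ih, h⟩) using 1
      push_cast; ring
  convert (hstart (2 * i)).1 using 1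
  push_cast
  linear_combination (i : ZMod n) * natCast_add_two_mul_eq_zero hn

theorem dvd_add_of_add_mem [NeZero n] (hn : 2 * k + s = n) (hs : 0 < s) (hA : cyclicDiam A ≤ k)
    (hrigid : ∀ b, ¬ IsLooseStart k A b) (ha : IsRunStart k A a) {v : ℕ} (hv : a + v ∈ A) :
    s ∣ v + k := by
  by_contra hvk
  -- The multiple of `s` following `v + k` differs from `v` by an amount in `(k, n - k)`.
  have hlt := Nat.mod_lt (v + k) hs
  have hsucc : v + (k + (s - (v + k) % s)) = ((v + k) / s + 1) * s := by
    have := Nat.div_add_mod' (v + k) s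
    rw [add_mul]; omega
  refine cyclicDiam_le_iff.1 hA _ hv (k + (s - (v + k) % s)) (by omega) (by omega) ?_
  rw [add_assoc, ← Nat.cast_add, hsucc]
  exact add_mul_mem_of_isRunStart hn hrigid ha _

theorem eq_residueClass_of_isRunStart [NeZero n] (hn : 2 * k + s = n) (hsk : s ∣ k) (hsn : s ∣ n)
    (hA : cyclicDiam A ≤ k) (hrigid : ∀ b, ¬ IsLooseStart k A b) (ha : IsRunStart k A a) :
    A = residueClass hsn (ZMod.castHom hsn (ZMod s) a) := by
  have hs : 0 < s := Nat.pos_of_dvd_of_pos hsn (NeZero.pos n)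
  ext x
  obtain ⟨v, rfl⟩ : ∃ v : ℕ, x = a + v := ⟨(x - a).val, by simp⟩
  rw [mem_residueClass, map_add, map_natCast, add_eq_left, ZMod.natCast_eq_zero_iff]
  refine ⟨fun hv => ?_, ?_⟩
  · exact (Nat.dvd_add_iff_left hsk).2 (dvd_add_of_add_mem hn hs hA hrigid ha hv)
  · rintro ⟨i, rfl⟩
    rw [mul_comm]
    exact add_mul_mem_of_isRunStart hn hrigid ha i

theorem cyclicDiam_residueClass_le [NeZero n] (hn : 2 * k + s = n) (hsk : s ∣ k) (hsn : s ∣ n)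
    (c : ZMod s) : cyclicDiam (residueClass hsn c) ≤ k := by
  refine cyclicDiam_le_iff.2 fun x hx j hkj hjn hxj => ?_
  rw [mem_residueClass] at hx hxj
  rw [map_add, hx, map_natCast, add_eq_left, ZMod.natCast_eq_zero_iff] at hxj
  have := Nat.le_of_dvd (by omega) (Nat.dvd_sub hxj hsk)
  omega

theorem not_isLooseStart_residueClass [NeZero n] (hsk : s ∣ k) (hsn : s ∣ n) (c : ZMod s)
    (a : ZMod n) : ¬ IsLooseStart k (residueClass hsn c) a := by
  rintro ⟨ha, hak⟩
  refine hak (mem_residueClass.2 ?_)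
  rw [map_sub, mem_residueClass.1 ha.1, map_natCast, (ZMod.natCast_eq_zero_iff _ _).2 hsk, sub_zero]

theorem nonempty_and_cyclicDiam_le_and_rigid_iff [NeZero n] (hn : 2 * k + s = n) (hsk : s ∣ k)
    (hsn : s ∣ n) :
    (A.Nonempty ∧ cyclicDiam A ≤ k ∧ ∀ a, ¬ IsLooseStart k A a) ↔
      ∃ c, residueClass hsn c = A := by
  constructor
  · rintro ⟨hne, hA, hrigid⟩
    obtain ⟨a, ha⟩ := exists_isRunStart (k := k) hne
    exact ⟨_, (eq_residueClass_of_isRunStart hn hsk hsn hA hrigid ha).symm⟩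
  · rintro ⟨c, rfl⟩
    exact ⟨residueClass_nonempty hsn c, cyclicDiam_residueClass_le hn hsk hsn c,
      not_isLooseStart_residueClass hsk hsn c⟩

open Classical in
theorem sum_neg_one_pow_card_rigid [NeZero n] (hn : 2 * k + s = n) (hs : 0 < s) :
    ∑ A : Finset (ZMod n) with A.Nonempty ∧ cyclicDiam A ≤ k ∧ ∀ a, ¬ IsLooseStart k A a,
      (-1 : ℤ) ^ #A = if s ∣ k then -(s : ℤ) else 0 := by
  split_ifs with hsk
  · have : NeZero s := ⟨hs.ne'⟩
    have hsn : s ∣ n := hn ▸ (hsk.mul_left 2).add dvd_rfl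
    have hodd : ∀ c : ZMod s, Odd #(residueClass hsn c) := fun c => by
      obtain ⟨q, rfl⟩ := hsk
      refine ⟨q, Nat.eq_of_mul_eq_mul_left hs ((mul_card_residueClass hsn c).trans ?_)⟩
      rw [← hn]; ring
    have himage : ({A | A.Nonempty ∧ cyclicDiam A ≤ k ∧ ∀ a, ¬ IsLooseStart k A a} :
        Finset (Finset (ZMod n))) = univ.image (residueClass hsn) := by
      ext A
      simp only [mem_filter_univ, mem_image_univ_iff_mem_range, Set.mem_range,
        nonempty_and_cyclicDiam_le_and_rigid_iff hn hsk hsn]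
    rw [himage, sum_image (residueClass_injective hsn).injOn]
    simp only [(hodd _).neg_one_pow, sum_const, card_univ, ZMod.card, nsmul_eq_mul, mul_neg_one]
  · refine sum_eq_zero fun A hA => absurd ?_ hsk
    obtain ⟨hne, hAk, hrigid⟩ := (mem_filter_univ A).1 hA
    obtain ⟨a, ha⟩ := exists_isRunStart (k := k) hne
    simpa using dvd_add_of_add_mem (v := 0) hn hs hAk hrigid ha (by simpa using ha.1)

end Rigid

section EulerCharacteristic

variable {n k s : ℕ}

theorem sum_nonempty_neg_one_pow_card {α : Type*} [Fintype α] [Nonempty α] :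
    ∑ A : Finset α with A.Nonempty, (-1 : ℤ) ^ #A = -1 := by
  classical
  have h := sum_powerset_neg_one_pow_card_of_nonempty (univ_nonempty (α := α))
  rw [powerset_univ, ← sum_erase_add _ _ (mem_univ ∅), card_empty, pow_zero] at h
  have hfilter : ({A | A.Nonempty} : Finset (Finset α)) = univ.erase ∅ := by
    ext A; simp [nonempty_iff_ne_empty]
  rw [hfilter]
  exact eq_neg_of_add_eq_zero_left h

/-- The Euler characteristic, up to sign, of the clique complex of the graph on `ZMod n` that joins
points at cyclic distance at most `k`. -/
theorem sum_neg_one_pow_card_cyclicDiam_le [NeZero n] (hn : 2 * k + s = n) (hs : 0 < s) :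
    ∑ A : Finset (ZMod n) with A.Nonempty ∧ cyclicDiam A ≤ k, (-1 : ℤ) ^ #A =
      if s ∣ k then -(s : ℤ) else 0 := by
  classical
  by_cases hs1 : s = 1
  · subst hs1
    have hk : ∀ A : Finset (ZMod n), cyclicDiam A ≤ k := fun A =>
      (cyclicDiam_le_half A).trans (by omega)
    simp only [hk, and_true, sum_nonempty_neg_one_pow_card, one_dvd, if_true, Nat.cast_one]
  · have hloose (A : Finset (ZMod n)) :
        (A.Nonempty ∧ cyclicDiam A ≤ k) ∧ (¬ ∀ a, ¬ IsLooseStart k A a) ↔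
          cyclicDiam A ≤ k ∧ ∃ a, IsLooseStart k A a := by
      rw [not_forall_not]
      exact ⟨fun h => ⟨h.1.2, h.2⟩, fun ⟨hA, a, ha⟩ => ⟨⟨⟨a, ha.1.1⟩, hA⟩, a, ha⟩⟩
    rw [← sum_filter_add_sum_filter_not _ (fun A => ∀ a, ¬ IsLooseStart k A a), filter_filter,
      filter_filter]
    simp only [hloose, and_assoc]
    rw [sum_neg_one_pow_card_isLooseStart_eq_zero (by omega), add_zero,
      sum_neg_one_pow_card_rigid hn hs]

end EulerCharacteristic

section Geometry

variable {n : ℕ} [NeZero n]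

theorem norm_stdAddChar_intCast_sub_one (j : ℤ) :
    ‖ZMod.stdAddChar (j : ZMod n) - 1‖ = 2 * |Real.sin (π * j / n)| := by
  have hexp : ZMod.stdAddChar (j : ZMod n) =
      Complex.exp (Complex.I * ((2 * (π * j / n) : ℝ) : ℂ)) := by
    rw [ZMod.stdAddChar_coe]
    congr 1
    push_cast; ring
  rw [hexp, Complex.norm_exp_I_mul_ofReal_sub_one, mul_div_cancel_left₀ _ two_ne_zero, norm_mul,
    Real.norm_two, Real.norm_eq_abs]

theorem pi_mul_natAbs_valMinAbs_div_le (x : ZMod n) : π * x.valMinAbs.natAbs / n ≤ π / 2 := by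
  have hn : (0 : ℝ) < n := Nat.cast_pos.2 (NeZero.pos n)
  have hhalf : (x.valMinAbs.natAbs : ℝ) ≤ n / 2 :=
    (Nat.cast_le.2 (ZMod.natAbs_valMinAbs_le x)).trans Nat.cast_div_le
  rw [div_le_iff₀ hn]
  exact (mul_le_mul_of_nonneg_left hhalf Real.pi_pos.le).trans_eq (by ring)

theorem dist_stdAddChar (x y : ZMod n) :
    dist (ZMod.stdAddChar x) (ZMod.stdAddChar y) =
      2 * Real.sin (π * (y - x).valMinAbs.natAbs / n) := by
  have habs : |π * (y - x).valMinAbs / n| = π * (y - x).valMinAbs.natAbs / n := by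
    rw [abs_div, abs_mul, abs_of_pos Real.pi_pos, Nat.abs_cast, Nat.cast_natAbs, Int.cast_abs]
  have hpi : |π * (y - x).valMinAbs / n| ≤ π := by
    rw [habs]
    exact (pi_mul_natAbs_valMinAbs_div_le _).trans (half_le_self Real.pi_pos.le)
  calc dist (ZMod.stdAddChar x) (ZMod.stdAddChar y)
      = ‖ZMod.stdAddChar x * (ZMod.stdAddChar (y - x) - 1)‖ := by
        rw [dist_comm, dist_eq_norm, mul_sub_one, ← AddChar.map_add_eq_mul, add_sub_cancel]
    _ = ‖ZMod.stdAddChar (((y - x).valMinAbs : ℤ) : ZMod n) - 1‖ := by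
        rw [norm_mul, ZMod.stdAddChar_apply x, Circle.norm_coe, one_mul, ZMod.coe_valMinAbs]
    _ = 2 * Real.sin (π * (y - x).valMinAbs.natAbs / n) := by
        rw [norm_stdAddChar_intCast_sub_one, Real.abs_sin_eq_sin_abs_of_abs_le_pi hpi, habs]

theorem diam_image_stdAddChar {B : Finset (ZMod n)} (hB : B.Nonempty) :
    Metric.diam (ZMod.stdAddChar '' (B : Set (ZMod n))) =
      2 * Real.sin (π * cyclicDiam B / n) := by
  obtain ⟨a, ha, b, hb, hab⟩ := exists_natAbs_valMinAbs_eq_cyclicDiam hB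
  have hdist : dist (ZMod.stdAddChar a) (ZMod.stdAddChar b) =
      2 * Real.sin (π * cyclicDiam B / n) := by rw [dist_stdAddChar, hab]
  apply le_antisymm
  · refine Metric.diam_le_of_forall_dist_le (hdist ▸ dist_nonneg) ?_
    rintro _ ⟨x, hx, rfl⟩ _ ⟨y, hy, rfl⟩
    rw [dist_stdAddChar]
    gcongr
    refine Real.sin_le_sin_of_le_of_le_pi_div_two ?_ ?_ ?_
    · exact (neg_nonpos.2 Real.pi_div_two_pos.le).trans (by positivity)
    · exact hab ▸ pi_mul_natAbs_valMinAbs_div_le (b - a)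
    · gcongr
      exact natAbs_valMinAbs_le_cyclicDiam hx hy
  · rw [← hdist]
    exact Metric.dist_le_diam_of_mem (B.finite_toSet.image _).isBounded
      (Set.mem_image_of_mem _ ha) (Set.mem_image_of_mem _ hb)

theorem euclCycle_eq_image_stdAddChar :
    euclCycle n = univ.image fun x : ZMod n => ZMod.stdAddChar x := by
  have hexp : ∀ k : ℕ, ZMod.stdAddChar (k : ZMod n) =
      Complex.exp (2 * (π : ℂ) * (k : ℂ) / (n : ℂ) * Complex.I) := by
    intro k
    rw [← Int.cast_natCast, ZMod.stdAddChar_coe]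
    congr 1
    push_cast; ring
  ext z
  simp only [euclCycle, mem_image, mem_range, mem_univ, true_and]
  constructor
  · rintro ⟨k, _, rfl⟩
    exact ⟨k, hexp k⟩
  · rintro ⟨x, rfl⟩
    exact ⟨x.val, x.val_lt, by rw [← hexp, ZMod.natCast_zmod_val]⟩

end Geometry

section RipsMagnitude

theorem neg_one_pow_card_sub_one {α : Type*} {B : Finset α} (hB : B.Nonempty) :
    (-1 : ℝ) ^ (#B - 1) = -(-1) ^ #B := by
  obtain ⟨c, hc⟩ := Nat.exists_eq_add_one.2 hB.card_pos
  rw [hc, Nat.add_sub_cancel, pow_succ, mul_neg_one, neg_neg]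

theorem ripsMag_image_of_injective {X Y : Type*} [Fintype X] [MetricSpace Y] [DecidableEq Y]
    {f : X → Y} (hf : f.Injective) (t : ℝ) :
    ripsMag (univ.image f) t = -∑ B : Finset X with B.Nonempty,
      (-1 : ℝ) ^ #B * Real.exp (-Metric.diam (f '' B) * t) := by
  have himage : ({C ∈ (univ.image f).powerset | C.Nonempty} : Finset (Finset Y)) =
      ({B | B.Nonempty} : Finset (Finset X)).image (image f) := by
    ext C
    simp only [mem_filter, mem_powerset, subset_image_iff, mem_image, mem_univ, true_and]
    constructor
    · rintro ⟨⟨B, -, rfl⟩, hC⟩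
      exact ⟨B, image_nonempty.1 hC, rfl⟩
    · rintro ⟨B, hB, rfl⟩
      exact ⟨⟨B, subset_univ B, rfl⟩, hB.image f⟩
  rw [ripsMag, himage, sum_image (image_injective hf).injOn, ← sum_neg_distrib]
  refine sum_congr rfl fun B hB => ?_
  rw [card_image_of_injective _ hf, coe_image,
    neg_one_pow_card_sub_one ((mem_filter_univ B).1 hB), neg_mul]

theorem sum_mul_comp_eq_add_sum_range {ι R : Type*} [CommRing R] (S : Finset ι) (w : ι → R)
    {d : ι → ℕ} {K : ℕ} (hd : ∀ i ∈ S, d i ≤ K) (g : ℕ → R) :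
    ∑ i ∈ S, w i * g (d i) =
      (∑ i ∈ S, w i) * g K + ∑ k ∈ range K, (∑ i ∈ S with d i ≤ k, w i) * (g k - g (k + 1)) := by
  have htelescope : ∀ i ∈ S, g (d i) =
      g K + ∑ k ∈ range K, if d i ≤ k then g k - g (k + 1) else 0 := fun i hi => by
    have hIco : {k ∈ range K | d i ≤ k} = Ico (d i) K := by ext; simp [and_comm]
    rw [← sum_filter, hIco, sum_Ico_eq_sum_range]
    have := sum_range_sub' (fun j => g (d i + j)) (K - d i)
    simp only [Nat.add_sub_cancel' (hd i hi), add_zero, ← add_assoc] at this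
    rw [this]; ring
  rw [sum_congr rfl fun i hi => by rw [htelescope i hi, mul_add, mul_sum], sum_add_distrib,
    ← sum_mul, sum_comm]
  congr 1
  refine sum_congr rfl fun k _ => ?_
  simp only [sum_mul, sum_filter, mul_ite, ite_mul, mul_zero, zero_mul]

theorem ripsMag_euclCycle_eq_neg_sum {n : ℕ} [NeZero n] (t : ℝ) :
    ripsMag (euclCycle n) t = -∑ B : Finset (ZMod n) with B.Nonempty,
      (-1 : ℝ) ^ #B * Real.exp (-2 * t * Real.sin (π * cyclicDiam B / n)) := by
  rw [euclCycle_eq_image_stdAddChar, ripsMag_image_of_injective ZMod.injective_stdAddChar]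
  refine congrArg Neg.neg (sum_congr rfl fun B hB => ?_)
  rw [diam_image_stdAddChar ((mem_filter_univ B).1 hB)]
  ring_nf

theorem ripsMag_euclCycle_eq_sum_range {n : ℕ} [NeZero n] (t : ℝ) :
    ripsMag (euclCycle n) t = Real.exp (-2 * t * Real.sin (π * ((n + 1) / 2 : ℕ) / n)) +
      ∑ k ∈ range ((n + 1) / 2) with n - 2 * k ∣ k, ((n - 2 * k : ℕ) : ℝ) *
        (Real.exp (-2 * t * Real.sin (π * k / n)) -
          Real.exp (-2 * t * Real.sin (π * (k + 1 : ℕ) / n))) := by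
  have hle : ∀ B ∈ ({B | B.Nonempty} : Finset (Finset (ZMod n))),
      cyclicDiam B ≤ (n + 1) / 2 := fun B _ => (cyclicDiam_le_half B).trans (by omega)
  have hsublevel : ∀ k ∈ range ((n + 1) / 2),
      ∑ B : Finset (ZMod n) with B.Nonempty ∧ cyclicDiam B ≤ k, (-1 : ℝ) ^ #B =
        if n - 2 * k ∣ k then -((n - 2 * k : ℕ) : ℝ) else 0 := fun k hk => by
    rw [mem_range] at hk
    exact_mod_cast sum_neg_one_pow_card_cyclicDiam_le (n := n) (k := k) (s := n - 2 * k)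
      (by omega) (by omega)
  have htotal : ∑ B : Finset (ZMod n) with B.Nonempty, (-1 : ℝ) ^ #B = -1 := by
    exact_mod_cast sum_nonempty_neg_one_pow_card (α := ZMod n)
  rw [ripsMag_euclCycle_eq_neg_sum, sum_mul_comp_eq_add_sum_range _ _ hle
    fun k => Real.exp (-2 * t * Real.sin (π * k / n)), htotal, neg_add, neg_one_mul, neg_neg,
    ← sum_neg_distrib, sum_filter]
  refine congrArg _ (sum_congr rfl fun k hk => ?_)
  rw [filter_filter, hsublevel k hk]
  split_ifs <;> ring

end RipsMagnitude

section OddDivisors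

theorem mem_filter_odd_divisors_iff {n r : ℕ} (hn : n ≠ 0) :
    r ∈ n.divisors.filter Odd ↔ ∃ l s, n = (2 * l + 1) * s ∧ r = 2 * l + 1 := by
  rw [mem_filter, Nat.mem_divisors, and_iff_left hn]
  constructor
  · rintro ⟨⟨s, hs⟩, l, rfl⟩
    exact ⟨l, s, hs, rfl⟩
  · rintro ⟨l, s, rfl, rfl⟩
    exact ⟨dvd_mul_right _ _, l, rfl⟩

theorem mem_filter_sub_two_mul_dvd_iff {n k : ℕ} (hn : n ≠ 0) :
    k ∈ {k ∈ range ((n + 1) / 2) | n - 2 * k ∣ k} ↔ ∃ l s, n = (2 * l + 1) * s ∧ k = l * s := by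
  rw [mem_filter, mem_range]
  constructor
  · rintro ⟨hk, l, hl⟩
    refine ⟨l, n - 2 * k, ?_, by rwa [mul_comm]⟩
    rw [add_mul, one_mul, mul_assoc, mul_comm l, ← hl]
    omega
  · rintro ⟨l, s, rfl, rfl⟩
    have hsub : (2 * l + 1) * s - 2 * (l * s) = s := by
      rw [add_mul, one_mul, mul_assoc, Nat.add_sub_cancel_left]
    have hs : s ≠ 0 := right_ne_zero_of_mul hn
    exact ⟨by omega, hsub.symm ▸ dvd_mul_left s l⟩

theorem sub_div_odd_div_two (l s : ℕ) :
    ((2 * l + 1) * s - (2 * l + 1) * s / (2 * l + 1)) / 2 = l * s := by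
  rw [Nat.mul_div_cancel_left s (2 * l).succ_pos, add_mul, one_mul, Nat.add_sub_cancel, mul_assoc,
    Nat.mul_div_cancel_left _ two_pos]

theorem sum_sub_two_mul_dvd_eq_sum_odd_divisors {M : Type*} [AddCommMonoid M] (n : ℕ) (f : ℕ → M) :
    ∑ k ∈ range ((n + 1) / 2) with n - 2 * k ∣ k, f k =
      ∑ r ∈ n.divisors with Odd r, f ((n - n / r) / 2) := by
  rcases eq_or_ne n 0 with rfl | hn
  · simp
  symm
  refine sum_nbij (fun r => (n - n / r) / 2) (fun r hr => ?_) ?_ (fun k hk => ?_) fun _ _ => rfl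
  · obtain ⟨l, s, rfl, rfl⟩ := (mem_filter_odd_divisors_iff hn).1 hr
    exact (mem_filter_sub_two_mul_dvd_iff hn).2 ⟨l, s, rfl, sub_div_odd_div_two l s⟩
  · intro r hr r' hr' heq
    obtain ⟨l, s, rfl, rfl⟩ := (mem_filter_odd_divisors_iff hn).1 hr
    obtain ⟨l', s', hs', rfl⟩ := (mem_filter_odd_divisors_iff hn).1 hr'
    have hls : l * s = l' * s' := by
      rw [← sub_div_odd_div_two l s, ← sub_div_odd_div_two l' s', ← hs']; exact heq
    obtain rfl : s = s' := by linarith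
    rw [Nat.eq_of_mul_eq_mul_right (Nat.pos_of_ne_zero (right_ne_zero_of_mul hn)) hs']
  · obtain ⟨l, s, rfl, rfl⟩ := (mem_filter_sub_two_mul_dvd_iff hn).1 hk
    exact ⟨2 * l + 1, mem_coe.2 ((mem_filter_odd_divisors_iff hn).2 ⟨l, s, rfl, rfl⟩),
      sub_div_odd_div_two l s⟩

/-- The contribution of an odd divisor `r` of `n` to the Rips magnitude of `C_n^eucl`: the jump of
`e^{-diam t}` at the scale where the clique complex of the cycle is a wedge of `n / r - 1` spheres
of even dimension. -/
noncomputable def oddDivisorTerm (t : ℝ) (n r : ℕ) : ℝ :=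
  n / r * (Real.exp (-2 * t * Real.cos (π / (2 * r))) -
    Real.exp (-2 * t * Real.cos (π / (2 * r) - π / n)))

theorem oddDivisorTerm_eq {n r : ℕ} (hr : r ∈ n.divisors.filter Odd) (t : ℝ) :
    oddDivisorTerm t n r = ((n - 2 * ((n - n / r) / 2) : ℕ) : ℝ) *
      (Real.exp (-2 * t * Real.sin (π * ((n - n / r) / 2 : ℕ) / n)) -
        Real.exp (-2 * t * Real.sin (π * ((n - n / r) / 2 + 1 : ℕ) / n))) := by
  have hn : n ≠ 0 := Nat.ne_zero_of_mem_divisors (mem_filter.1 hr).1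
  obtain ⟨l, s, rfl, rfl⟩ := (mem_filter_odd_divisors_iff hn).1 hr
  have hs : (s : ℝ) ≠ 0 := Nat.cast_ne_zero.2 (right_ne_zero_of_mul hn)
  have hl : (2 * l + 1 : ℝ) ≠ 0 := by positivity
  have hsub : (2 * l + 1) * s - 2 * (l * s) = s := by
    rw [add_mul, one_mul, mul_assoc, Nat.add_sub_cancel_left]
  rw [oddDivisorTerm, sub_div_odd_div_two, hsub, ← Real.sin_pi_div_two_sub,
    ← Real.sin_pi_div_two_sub]
  congr 5 <;> push_cast <;> field_simp <;> ring

theorem ripsMag_euclCycle_eq_sum_oddDivisorTerm {n : ℕ} (hn : n ≠ 0) (t : ℝ) :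
    ripsMag (euclCycle n) t = Real.exp (-2 * t * Real.sin (π * ((n + 1) / 2 : ℕ) / n)) +
      ∑ r ∈ n.divisors with Odd r, oddDivisorTerm t n r := by
  have : NeZero n := ⟨hn⟩
  rw [ripsMag_euclCycle_eq_sum_range, sum_sub_two_mul_dvd_eq_sum_odd_divisors]
  exact congrArg _ (sum_congr rfl fun r hr => (oddDivisorTerm_eq hr t).symm)

end OddDivisors

section Asymptotics

theorem tendsto_half_div_self :
    Tendsto (fun n : ℕ => (((n + 1) / 2 : ℕ) : ℝ) / n) atTop (𝓝 (1 / 2)) := by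
  have hupper : Tendsto (fun n : ℕ => 1 / 2 + 1 / (n : ℝ)) atTop (𝓝 (1 / 2)) := by
    have h := (tendsto_const_div_atTop_nhds_zero_nat (1 : ℝ)).const_add (1 / 2)
    rwa [add_zero] at h
  refine tendsto_of_tendsto_of_tendsto_of_le_of_le' tendsto_const_nhds hupper ?_ ?_ <;>
    filter_upwards [eventually_gt_atTop 0] with n hn
  · rw [div_le_div_iff₀ two_pos (Nat.cast_pos.2 hn)]
    exact_mod_cast (by omega : 1 * n ≤ (n + 1) / 2 * 2)
  · rw [div_add_div _ _ two_ne_zero (Nat.cast_ne_zero.2 hn.ne'), div_le_div_iff₀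
      (Nat.cast_pos.2 hn) (by positivity)]
    have : (n + 1) / 2 * 2 ≤ n + 2 := by omega
    have : (((n + 1) / 2 : ℕ) : ℝ) * 2 ≤ n + 2 := by exact_mod_cast this
    nlinarith [(Nat.cast_pos (α := ℝ)).2 hn]

theorem tendsto_exp_sin_half (t : ℝ) :
    Tendsto (fun n : ℕ => Real.exp (-2 * t * Real.sin (π * ((n + 1) / 2 : ℕ) / n))) atTop
      (𝓝 (Real.exp (-2 * t))) := by
  have hcont : Continuous fun x : ℝ => Real.exp (-2 * t * Real.sin (π * x)) := by fun_prop
  have h := (hcont.tendsto (1 / 2)).comp tendsto_half_div_self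
  rw [mul_one_div, Real.sin_pi_div_two, mul_one] at h
  simpa only [Function.comp_def, ← mul_div_assoc] using h

theorem tendsto_oddDivisorTerm (t : ℝ) (r : ℕ) :
    Tendsto (fun n => oddDivisorTerm t n r) atTop
      (𝓝 (2 * π * t * (1 / (r : ℝ) * Real.exp (-2 * t * Real.cos (π / (2 * (r : ℝ)))) *
        Real.sin (π / (2 * (r : ℝ)))))) := by
  have hderiv : HasDerivAt (fun x => Real.exp (-2 * t * Real.cos x)) _ (π / (2 * r)) :=
    ((Real.hasDerivAt_cos _).const_mul (-2 * t)).exp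
  have hslope := (hderiv.hasFDerivAt.lim (-π) (c := fun n : ℕ => (n : ℝ))
    (tendsto_norm_atTop_atTop.comp tendsto_natCast_atTop_atTop)).const_mul (-1 / (r : ℝ))
  convert hslope using 2 with n
  · simp only [oddDivisorTerm, smul_eq_mul, mul_neg, ← sub_eq_add_neg, inv_mul_eq_div]
    ring
  · simp only [ContinuousLinearMap.toSpanSingleton_apply, smul_eq_mul]
    ring

theorem abs_exp_sub_exp_le {x y c : ℝ} (hx : x ≤ c) (hy : y ≤ c) :
    |Real.exp x - Real.exp y| ≤ Real.exp c * |x - y| := by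
  wlog hyx : y ≤ x generalizing x y
  · rw [abs_sub_comm, abs_sub_comm x]
    exact this hy hx (le_of_not_ge hyx)
  have hexp : Real.exp y = Real.exp x * Real.exp (y - x) := by rw [← Real.exp_add]; ring_nf
  rw [abs_of_nonneg (sub_nonneg.2 (Real.exp_le_exp.2 hyx)), abs_of_nonneg (sub_nonneg.2 hyx)]
  calc Real.exp x - Real.exp y = Real.exp x * (1 - Real.exp (y - x)) := by rw [hexp]; ring
    _ ≤ Real.exp x * (x - y) :=
        mul_le_mul_of_nonneg_left (by linarith [Real.add_one_le_exp (y - x)]) (Real.exp_pos x).le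
    _ ≤ Real.exp c * (x - y) := by gcongr

theorem abs_cos_sub_cos_le (x y : ℝ) : |Real.cos x - Real.cos y| ≤ |x + y| * |x - y| / 2 := by
  calc |Real.cos x - Real.cos y| = 2 * (|Real.sin ((x + y) / 2)| * |Real.sin ((x - y) / 2)|) := by
        rw [Real.cos_sub_cos, abs_mul, abs_mul, abs_neg, abs_two, mul_assoc]
    _ ≤ 2 * (|(x + y) / 2| * |(x - y) / 2|) :=
        mul_le_mul_of_nonneg_left (mul_le_mul Real.abs_sin_le_abs Real.abs_sin_le_abs
          (abs_nonneg _) (abs_nonneg _)) zero_le_two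
    _ = |x + y| * |x - y| / 2 := by rw [abs_div, abs_div, abs_two]; ring

theorem abs_oddDivisorTerm_le (t : ℝ) {n r : ℕ} (hr : 0 < r) (hrn : r ≤ n) :
    |oddDivisorTerm t n r| ≤ π ^ 2 * |t| * Real.exp (2 * |t|) * (1 / (r : ℝ) ^ 2) := by
  have hn0 : (0 : ℝ) < n := Nat.cast_pos.2 (hr.trans_le hrn)
  set x : ℝ := π / (2 * r)
  set y : ℝ := x - π / n
  have hexponent : ∀ z, -2 * t * Real.cos z ≤ 2 * |t| := fun z => by
    rw [← mul_one (2 * |t|)]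
    refine (le_abs_self _).trans ?_
    rw [abs_mul, abs_mul, abs_neg, abs_two]
    gcongr
    exact Real.abs_cos_le_one z
  have hadd : |x + y| ≤ π / r := by
    have hxy : x + y = π / r - π / n := by simp only [x, y]; ring
    have hle : π / n ≤ π / r := by gcongr
    rw [hxy, abs_of_nonneg (sub_nonneg.2 hle)]
    exact sub_le_self _ (by positivity)
  have hsub : |x - y| = π / n := by
    rw [sub_sub_cancel, abs_of_pos (by positivity)]
  calc |oddDivisorTerm t n r|
      = n / r * |Real.exp (-2 * t * Real.cos x) - Real.exp (-2 * t * Real.cos y)| := by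
        rw [oddDivisorTerm, abs_mul, abs_of_pos (by positivity)]
    _ ≤ n / r * (Real.exp (2 * |t|) * |-2 * t * Real.cos x - -2 * t * Real.cos y|) := by
        gcongr
        exact abs_exp_sub_exp_le (hexponent x) (hexponent y)
    _ = n / r * (Real.exp (2 * |t|) * (2 * |t| * |Real.cos x - Real.cos y|)) := by
        rw [← mul_sub, abs_mul, abs_mul, abs_neg, abs_two]
    _ ≤ n / r * (Real.exp (2 * |t|) * (2 * |t| * (π / r * (π / n) / 2))) := by
        gcongr
        refine (abs_cos_sub_cos_le x y).trans ?_
        rw [hsub]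
        gcongr
    _ = π ^ 2 * |t| * Real.exp (2 * |t|) * (1 / (r : ℝ) ^ 2) := by field_simp

theorem tendsto_sum_oddDivisorTerm {ι : Type*} {l : Filter ι} {n : ι → ℕ} {D : Set ℕ}
    (hn : Tendsto n l atTop) (hD : ∀ r, ∀ᶠ i in l, r ∈ (n i).divisors.filter Odd ↔ r ∈ D)
    (t : ℝ) :
    Tendsto (fun i => ∑ r ∈ (n i).divisors with Odd r, oddDivisorTerm t (n i) r) l
      (𝓝 (∑' r : D, 2 * π * t * (1 / (r : ℝ) * Real.exp (-2 * t * Real.cos (π / (2 * (r : ℝ)))) *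
        Real.sin (π / (2 * (r : ℝ)))))) := by
  simp only [sum_eq_tsum_indicator _ _ (.unconditional ℕ)]
  rw [tsum_subtype D fun r : ℕ => 2 * π * t * (1 / (r : ℝ) *
    Real.exp (-2 * t * Real.cos (π / (2 * (r : ℝ)))) * Real.sin (π / (2 * (r : ℝ))))]
  refine tendsto_tsum_of_dominated_convergence
    ((Real.summable_one_div_nat_pow.2 one_lt_two).mul_left (π ^ 2 * |t| * Real.exp (2 * |t|)))
    (fun r => ?_) (.of_forall fun i r => ?_)
  · by_cases hr : r ∈ D
    · rw [Set.indicator_of_mem hr]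
      refine ((tendsto_oddDivisorTerm t r).comp hn).congr' ?_
      filter_upwards [hD r] with i hi
      exact (Set.indicator_of_mem (mem_coe.2 (hi.2 hr)) _).symm
    · rw [Set.indicator_of_notMem hr]
      refine tendsto_const_nhds.congr' ?_
      filter_upwards [hD r] with i hi
      exact (Set.indicator_of_notMem (fun h => hr (hi.1 (mem_coe.1 h))) _).symm
  · rw [norm_indicator_eq_indicator_norm]
    refine Set.indicator_apply_le' (fun hr => ?_) fun _ => by positivity
    have hdiv : r ∈ (n i).divisors := (mem_filter.1 hr).1
    exact abs_oddDivisorTerm_le t (Nat.pos_of_mem_divisors hdiv) (Nat.divisor_le hdiv)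

theorem ripsMag_euclCycle_tendsto_primes_general {ι : Type*} {l : Filter ι} {n : ι → ℕ} {D : Set ℕ}
    (hn : Tendsto n l atTop) (hD : ∀ r, ∀ᶠ i in l, r ∈ (n i).divisors.filter Odd ↔ r ∈ D)
    (t : ℝ) :
    Tendsto (fun i => ripsMag (euclCycle (n i)) t) l (𝓝 (Real.exp (-2 * t) + 2 * π * t *
      ∑' r : D, 1 / (r : ℝ) * Real.exp (-2 * t * Real.cos (π / (2 * (r : ℝ)))) *
        Real.sin (π / (2 * (r : ℝ))))) := by
  have h := ((tendsto_exp_sin_half t).comp hn).add (tendsto_sum_oddDivisorTerm hn hD t)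
  rw [tsum_mul_left] at h
  refine h.congr' ?_
  filter_upwards [hn.eventually_ne_atTop 0] with i hi
  exact (ripsMag_euclCycle_eq_sum_oddDivisorTerm hi t).symm

theorem eventually_mem_odd_divisors_mul_prime_iff (m r : ℕ) :
    ∀ᶠ p in atTop ⊓ 𝓟 {p : ℕ | p.Prime},
      r ∈ (m * p).divisors.filter Odd ↔ r ∈ m.divisors.filter Odd := by
  filter_upwards [mem_inf_of_left (eventually_gt_atTop r), mem_inf_of_right (mem_principal_self _)]
    with p hrp (hp : p.Prime)
  simp only [mem_filter, Nat.mem_divisors, mul_ne_zero_iff_right hp.ne_zero]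
  refine and_congr_left fun hr => and_congr_left' ?_
  exact (Nat.coprime_of_lt_prime hr.pos.ne' hrp hp).symm.dvd_mul_right

end Asymptotics

/-- for fixed `m ≥ 1` and `t > 0`, as `p → ∞` through the primes,
`|tC_{mp}^eucl|_Rips → e^{−2t} + 2πt Σ_{odd r ∣ m} (1/r) e^{−2t cos(π/(2r))} sin(π/(2r))`. -/
theorem ripsMag_euclCycle_tendsto_primes (m : ℕ) (hm : 1 ≤ m) (t : ℝ) (ht : 0 < t) :
    Filter.Tendsto (fun p : ℕ => ripsMag (euclCycle (m * p)) t)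
      (Filter.atTop ⊓ Filter.principal {p : ℕ | p.Prime})
      (nhds (Real.exp (-2 * t) + 2 * π * t *
        ∑ r ∈ m.divisors.filter (fun r => Odd r),
          (1 / (r : ℝ)) * Real.exp (-2 * t * Real.cos (π / (2 * (r : ℝ)))) *
            Real.sin (π / (2 * (r : ℝ))))) := by
  rw [← Finset.tsum_subtype]
  exact ripsMag_euclCycle_tendsto_primes_general
    ((tendsto_id.const_mul_atTop' hm).mono_left inf_le_left)
    (eventually_mem_odd_divisors_mul_prime_iff m) t
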